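/- Let n ≥ 1 and let Q ⊆ ℝⁿ be a polytope containing 0 in its interior with (finite) vertex set S, and let a : S → ℤ assign to each vertex a positive integer weight. Assume: (i) for every extreme point v of the dual polytope Q*, the facet F_v = {u ∈ Q : ⟨v,u⟩ = −1} has exactly n vertices e₁,…,eₙ, and the vectors (a(e₁)·e₁, …, a(eₙ)·eₙ) form a ℤ-basis of the lattice ℤⁿ; (ii) r := #S − n satisfies r ≥ 2; (iii) C is a real number such that Σ_{s∈T} a(s) ≤ C for every subset T ⊆ S with at most n elements. Then for every vertex u of Q and every extreme point v of Q*, one has 0 ≤ a(u)·(1 + ⟨v,u⟩) ≤ C^r. -/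

import Mathlib

/-- The dual set `Q* = {v : ⟨v,u⟩ ≥ -1 for all u ∈ Q}` of a subset of `ℝⁿ`. -/
def dualSet (n : ℕ) (Q : Set (Fin n → ℝ)) : Set (Fin n → ℝ) :=
  {v | ∀ u ∈ Q, -1 ≤ ∑ i, v i * u i}

/-!
Write `h s = a s * (1 + ⟨v, s⟩)`, which vanishes on the vertices of the facet `F` of `v`. Since the
polytope is not a simplex, for a vertex `u ∉ F` some `i ∈ F` is such that `T = {u} ∪ F \ {i}`
lies on no facet. The cones over the facets cover the space, so the lattice point
`x = ∑ s ∈ T, a s • s` equals `∑ s ∈ F', m s • a s • s` for a facet `F'` and natural numbers `m s`.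
With `A = ∑ s ∈ T, a s` and `D = ∑ s ∈ F', m s * a s`, the functional of `F'` shows `D < A`,
and evaluating `v` at `x` gives `h u = (A - D) + ∑ s ∈ F', m s * h s`. Hence `h s < h u` whenever
`m s ≠ 0`, so if all values of `h` below `h u` are at most `K ≥ 1`, then
`h u ≤ (A - D) + D * K ≤ A * K ≤ C * K`. Running through the `r` vertices outside `F` by increasing
`h` gives `h ≤ C ^ r`.
-/

open Module Set

theorem exists_mem_extremePoints_isMinOn {E : Type*} [AddCommGroup E] [Module ℝ E]
    [TopologicalSpace E] [T2Space E] [IsTopologicalAddGroup E] [ContinuousSMul ℝ E]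
    [LocallyConvexSpace ℝ E] {K : Set E} (hK : IsCompact K) (hne : K.Nonempty)
    (l : StrongDual ℝ E) : ∃ v ∈ K.extremePoints ℝ, IsMinOn l K v := by
  have hexp : IsExposed ℝ K ((-l).toExposed K) := ContinuousLinearMap.toExposed.isExposed
  obtain ⟨w, hwK, hw⟩ := hK.exists_isMinOn hne l.continuous.continuousOn
  have hne' : ((-l).toExposed K).Nonempty := ⟨w, hwK, fun y hy => neg_le_neg (hw hy)⟩
  obtain ⟨v, hv⟩ := (hexp.isCompact hK).extremePoints_nonempty hne'
  exact ⟨v, hexp.isExtreme.extremePoints_subset_extremePoints hv,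
    fun y hy => neg_le_neg_iff.1 (hv.1.2 y hy)⟩

theorem mem_of_mem_extremePoints_of_mem_convexHull {𝕜 E : Type*} [Ring 𝕜] [LinearOrder 𝕜]
    [IsStrictOrderedRing 𝕜] [DenselyOrdered 𝕜] [AddCommGroup E] [Module 𝕜 E]
    [IsTorsionFree 𝕜 E] {A T : Set E} {w : E} (hw : w ∈ A.extremePoints 𝕜)
    (hTA : convexHull 𝕜 T ⊆ A) (hwT : w ∈ convexHull 𝕜 T) : w ∈ T :=
  extremePoints_convexHull_subset (inter_extremePoints_subset_extremePoints_of_subset hTA ⟨hwT, hw⟩)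

theorem smul_add_sum_smul_mem_convexHull_insert {𝕜 E ι : Type*} [Field 𝕜] [LinearOrder 𝕜]
    [IsStrictOrderedRing 𝕜] [AddCommGroup E] [Module 𝕜 E] [Fintype ι] {l : 𝕜} {c : ι → 𝕜}
    (hl : 0 ≤ l) (hc : ∀ i, 0 ≤ c i) (hsum : l + ∑ i, c i = 1) (p : E) (z : ι → E) :
    l • p + ∑ i, c i • z i ∈ convexHull 𝕜 (insert p (range z)) := by
  refine mem_convexHull_of_exists_fintype (fun i : Option ι => i.elim l c) (fun i => i.elim p z)
    ?_ (by simpa only [Fintype.sum_option]) ?_ (by simp only [Fintype.sum_option, Option.elim])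
  · rintro (_ | i)
    exacts [hl, hc i]
  · rintro (_ | i)
    exacts [mem_insert p _, mem_insert_of_mem p (mem_range_self i)]

theorem dual_eq_smul_coord {ι R M : Type*} [CommSemiring R] [AddCommMonoid M] [Module R M]
    (b : Basis ι R M) {f : Dual R M} {i : ι} (hf : ∀ j, j ≠ i → f (b j) = 0) :
    f = f (b i) • b.coord i := by
  refine b.ext fun j => ?_
  rcases eq_or_ne j i with rfl | hji
  · simp
  · simp [hf j hji, Finsupp.single_eq_of_ne' hji]

theorem apply_nonneg_of_forall_le {E : Type*} [AddCommGroup E] [Module ℝ E] {S : Finset E}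
    {c : ℝ} {v f : Dual ℝ E} {x : E} (hv : ∀ s ∈ S, c ≤ v s)
    (hmin : ∀ w : Dual ℝ E, (∀ s ∈ S, c ≤ w s) → v x ≤ w x)
    (hf : ∀ s ∈ S, v s = c → 0 ≤ f s) : 0 ≤ f x := by
  have hfeasible : ∀ s ∈ S, ∀ᶠ t : ℝ in nhdsWithin 0 (Ioi 0), c ≤ (v + t • f) s := by
    intro s hs
    simp only [LinearMap.add_apply, LinearMap.smul_apply, smul_eq_mul]
    rcases (hv s hs).eq_or_lt with heq | hlt
    · filter_upwards [self_mem_nhdsWithin] with t (ht : 0 < t)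
      have := mul_nonneg ht.le (hf s hs heq.symm)
      linarith
    · have hcont : ContinuousAt (fun t : ℝ => v s + t * f s) 0 := by fun_prop
      have hnear := hcont.eventually_const_lt (u := c) (by simpa using hlt)
      filter_upwards [nhdsWithin_le_nhds hnear] with t ht using ht.le
  obtain ⟨t, htS, ht : 0 < t⟩ :=
    (((Filter.eventually_all_finset S).2 hfeasible).and self_mem_nhdsWithin).exists
  have hle : v x ≤ v x + t * f x := hmin (v + t • f) htS
  exact nonneg_of_mul_nonneg_right (le_add_iff_nonneg_right _ |>.1 hle) ht

theorem le_pow_card_of_forall_le_mul {α : Type*} (h : α → ℝ) {C : ℝ} (hC : 1 ≤ C) (P : Finset α)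
    (hstep : ∀ u ∈ P, ∀ K : ℝ, 1 ≤ K → (∀ f ∈ P, h f < h u → h f ≤ K) → h u ≤ C * K) :
    ∀ u ∈ P, h u ≤ C ^ P.card := by
  classical
  induction P using Finset.induction_on_max_value h with
  | empty => simp
  | insert p P hp hmax ih =>
    have hP : ∀ u ∈ P, h u ≤ C ^ P.card := by
      refine ih fun u hu K hK hbelow => hstep u (Finset.mem_insert_of_mem hu) K hK ?_
      rintro f hf hlt
      rcases Finset.mem_insert.1 hf with rfl | hf
      exacts [absurd hlt (hmax u hu).not_gt, hbelow f hf hlt]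
    rw [Finset.card_insert_of_notMem hp, Finset.forall_mem_insert]
    refine ⟨?_, fun u hu => (hP u hu).trans (pow_le_pow_right₀ hC P.card.le_succ)⟩
    rw [pow_succ']
    refine hstep p (Finset.mem_insert_self p P) _ (one_le_pow₀ hC) fun f hf hlt => hP f ?_
    exact Finset.mem_of_mem_insert_of_ne hf fun hfp => hlt.ne (congrArg h hfp)

/-- The submodule `Rⁿ` of `Aⁿ` for an `R`-algebra `A`; for `R = ℤ` and `A = ℝ` it is the standard
lattice. -/
def integralVectors (R A ι : Type*) [CommRing R] [CommRing A] [Algebra R A] : Submodule R (ι → A) :=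
  LinearMap.range ((Algebra.linearMap R A).compLeft ι)

theorem exists_basis_rows_of_isUnit_det {R : Type*} (A : Type*) {ι : Type*} [CommRing R]
    [CommRing A] [Algebra R A] [Fintype ι] [DecidableEq ι] {M : Matrix ι ι R}
    (hM : IsUnit M.det) :
    ∃ b : Basis ι A (ι → A), (∀ i, b i = fun j => algebraMap R A (M i j)) ∧
      Submodule.span R (range b) = integralVectors R A ι := by
  let castRow : (ι → R) →ₗ[R] (ι → A) := (Algebra.linearMap R A).compLeft ι
  have hdetA : IsUnit (M.map (algebraMap R A)).det :=
    (algebraMap R A).map_det M ▸ hM.map (algebraMap R A)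
  have hR := (Pi.basisFun R ι).is_basis_iff_det (v := M.row) |>.2 (by
    rw [Pi.basisFun_det]; exact hM)
  have hA := (Pi.basisFun A ι).is_basis_iff_det (v := castRow ∘ M.row) |>.2 (by
    rw [Pi.basisFun_det]; exact hdetA)
  refine ⟨Basis.mk hA.1 hA.2.ge, fun i => Basis.mk_apply .., ?_⟩
  rw [Basis.coe_mk, range_comp, ← Submodule.map_span, hR.2, Submodule.map_top, integralVectors]

section UnimodularPolytope

variable {E : Type*} [AddCommGroup E] [Module ℝ E] {S : Finset E} {a : E → ℝ} {L : Submodule ℤ E}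
  {V : Set (Dual ℝ E)} {v : Dual ℝ E} {u w p : E}

/-- The facet vertices of the functional `v`: the points of the vertex set `S` at which `v` takes
the value `-1`, the lower bound satisfied by the points of the dual polytope. -/
noncomputable def facet (S : Finset E) (v : Dual ℝ E) : Finset E := {s ∈ S | v s = -1}

/-- The height of `s` above the facet of `v`, multiplied by the weight of `s`. This is the quantity
`a(s) (1 + ⟨v, s⟩)` to be bounded. -/
def weightedHeight (a : E → ℝ) (v : Dual ℝ E) (s : E) : ℝ := a s * (1 + v s)

/-- `b` is the `ℤ`-basis of the lattice `L` formed by the weighted vertices of a facet. -/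
structure IsFacetBasis (a : E → ℝ) (L : Submodule ℤ E) {v : Dual ℝ E}
    (b : Basis (facet S v) ℝ E) : Prop where
  apply_eq : ∀ s, b s = a s • (s : E)
  span_eq : Submodule.span ℤ (range b) = L

/-- The polytope with vertex set `S` and with facets cut out by the functionals in `V`, in the case
that the weighted vertices of each facet are a `ℤ`-basis of `L`. That `V` consists of all the
facets is encoded as the covering property that every point has nonnegative coordinates with respect
to some facet. -/
structure IsUnimodularPolytope (S : Finset E) (a : E → ℝ) (L : Submodule ℤ E)
    (V : Set (Dual ℝ E)) : Prop where
  one_le_weight : ∀ s ∈ S, 1 ≤ a s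
  mem_extremePoints : ∀ s ∈ S, s ∈ (convexHull ℝ (S : Set E)).extremePoints ℝ
  zero_mem : 0 ∈ convexHull ℝ (S : Set E)
  neg_one_le : ∀ v ∈ V, ∀ s ∈ S, -1 ≤ v s
  exists_basis : ∀ v ∈ V, ∃ b : Basis (facet S v) ℝ E, IsFacetBasis a L b
  exists_repr_nonneg : ∀ x, ∃ v ∈ V, ∃ b : Basis (facet S v) ℝ E,
    IsFacetBasis a L b ∧ ∀ s, 0 ≤ b.repr x s

theorem mem_facet : w ∈ facet S v ↔ w ∈ S ∧ v w = -1 := Finset.mem_filter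

theorem facet_subset : facet S v ⊆ S := Finset.filter_subset _ _

theorem weightedHeight_eq_zero_of_mem_facet (hw : w ∈ facet S v) : weightedHeight a v w = 0 := by
  simp [weightedHeight, (mem_facet.1 hw).2]

theorem sum_weightedHeight {ι : Type*} (t : Finset ι) (m : ι → ℝ) (z : ι → E) :
    ∑ i ∈ t, m i * weightedHeight a v (z i) =
      ∑ i ∈ t, m i * a (z i) + v (∑ i ∈ t, (m i * a (z i)) • z i) := by
  simp only [weightedHeight, map_sum, map_smul, smul_eq_mul, ← Finset.sum_add_distrib]
  exact Finset.sum_congr rfl fun i _ => by ring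

theorem sum_weightedHeight_le_mul {ι : Type*} [Fintype ι] {T : Finset E} {m : ι → ℕ} {z : ι → E}
    {K : ℝ} (hrel : ∑ s ∈ T, a s • s = ∑ i, (m i * a (z i)) • z i)
    (hdeg : ∑ i, m i * a (z i) < ∑ s ∈ T, a s) (ha : ∀ i, 1 ≤ a (z i))
    (hv : ∀ i, -1 ≤ v (z i)) (hK : 1 ≤ K)
    (hbelow : ∀ i, weightedHeight a v (z i) < ∑ s ∈ T, weightedHeight a v s →
      weightedHeight a v (z i) ≤ K) :
    ∑ s ∈ T, weightedHeight a v s ≤ (∑ s ∈ T, a s) * K := by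
  have hdecomp : ∑ s ∈ T, weightedHeight a v s =
      ∑ s ∈ T, a s - ∑ i, m i * a (z i) + ∑ i, m i * weightedHeight a v (z i) := by
    have hT := sum_weightedHeight (a := a) (v := v) T 1 id
    simp only [Pi.one_apply, one_mul, id, hrel] at hT
    rw [hT, sum_weightedHeight]
    ring
  have hnonneg : ∀ i, 0 ≤ weightedHeight a v (z i) := fun i =>
    mul_nonneg (zero_le_one.trans (ha i)) (neg_le_iff_add_nonneg'.1 (hv i))
  have hterm : ∀ i, m i * weightedHeight a v (z i) ≤ m i * a (z i) * K := by
    intro i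
    rcases (m i).eq_zero_or_pos with hm | hm
    · simp [hm]
    have hle : weightedHeight a v (z i) ≤ ∑ j, m j * weightedHeight a v (z j) :=
      (le_mul_of_one_le_left (hnonneg i) (by exact_mod_cast hm)).trans
        (Finset.single_le_sum (f := fun j => m j * weightedHeight a v (z j))
          (fun j _ => mul_nonneg (m j).cast_nonneg (hnonneg j)) (Finset.mem_univ i))
    have hiK : weightedHeight a v (z i) ≤ K := hbelow i (by linarith)
    rw [mul_assoc]
    gcongr
    exact hiK.trans (le_mul_of_one_le_left (zero_le_one.trans hK) (ha i))
  calc ∑ s ∈ T, weightedHeight a v s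
      = ∑ s ∈ T, a s - ∑ i, m i * a (z i) + ∑ i, m i * weightedHeight a v (z i) := hdecomp
    _ ≤ (∑ s ∈ T, a s - ∑ i, m i * a (z i)) * K + (∑ i, m i * a (z i)) * K := by
      refine add_le_add (le_mul_of_one_le_right (sub_nonneg.2 hdeg.le) hK) ?_
      rw [Finset.sum_mul]
      exact Finset.sum_le_sum fun i _ => hterm i
    _ = (∑ s ∈ T, a s) * K := by ring

namespace IsFacetBasis

variable {b : Basis (facet S v) ℝ E}

theorem sum_repr_mul_weight_smul (hb : IsFacetBasis a L b) (x : E) :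
    ∑ s, (b.repr x s * a s) • (s : E) = x := by
  simpa only [hb.apply_eq, mul_smul] using b.sum_repr x

theorem apply_eq_neg_sum (hb : IsFacetBasis a L b) (x : E) :
    v x = -∑ s, b.repr x s * a s := by
  conv_lhs => rw [← hb.sum_repr_mul_weight_smul x]
  simp [fun s : facet S v => (mem_facet.1 s.2).2]

theorem coord_nonneg (hb : IsFacetBasis a L b) (ha : ∀ s ∈ S, 0 < a s) (hw : w ∈ facet S v)
    (s : facet S v) : 0 ≤ b.coord s w := by
  have hmul : a w * b.coord s w = b.coord s (b ⟨w, hw⟩) := by simp [hb.apply_eq]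
  refine nonneg_of_mul_nonneg_right ?_ (ha w (facet_subset hw))
  rw [hmul, b.coord_apply, b.repr_self]
  exact Finsupp.single_nonneg.2 zero_le_one s

/-- The hypotheses say that `w` is a convex combination of `p` and of the vertices of the facet. -/
theorem eq_or_mem_facet (hb : IsFacetBasis a L b) (ha : ∀ s ∈ S, 0 ≤ a s)
    (hw : w ∈ (convexHull ℝ (S : Set E)).extremePoints ℝ) (hp : p ∈ convexHull ℝ (S : Set E))
    {l : ℝ} (hl : 0 ≤ l) (hheight : l * (1 + v p) = 1 + v w)
    (hrepr : ∀ s, 0 ≤ b.repr (w - l • p) s) : w = p ∨ w ∈ facet S v := by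
  have hsum : l + ∑ s, b.repr (w - l • p) s * a s = 1 := by
    have := hb.apply_eq_neg_sum (w - l • p)
    simp only [map_sub, map_smul, smul_eq_mul] at this ⊢
    linarith
  have hmem := smul_add_sum_smul_mem_convexHull_insert hl
    (fun s => mul_nonneg (hrepr s) (ha s (facet_subset s.2))) hsum p (Subtype.val : facet S v → E)
  rw [hb.sum_repr_mul_weight_smul, add_sub_cancel] at hmem
  have hsub : insert p (range (Subtype.val : facet S v → E)) ⊆ convexHull ℝ (S : Set E) :=
    insert_subset hp (range_subset_iff.2 fun s => subset_convexHull ℝ _ (facet_subset s.2))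
  rcases mem_of_mem_extremePoints_of_mem_convexHull hw
    (convexHull_min hsub (convex_convexHull ℝ _)) hmem with hwp | ⟨s, rfl⟩
  exacts [.inl hwp, .inr s.2]

/-- If `v'` is another facet through `u` and through every vertex of the facet of `v` but `i`, then
`v' - v` is a positive multiple of the `i`-th coordinate. -/
theorem repr_sub_smul_nonneg (hb : IsFacetBasis a L b) (ha : ∀ s ∈ S, 0 ≤ a s)
    {v' : Dual ℝ E} (hv' : ∀ s ∈ S, -1 ≤ v' s) {i : facet S v}
    (hne : ∀ s ∈ facet S v, s ≠ i → v' s = -1) (hu : v' u = -1) (hvu : -1 < v u) (hw : w ∈ S)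
    {l : ℝ} (hheight : l * (1 + v u) = 1 + v w) : 0 ≤ b.repr (w - l • u) i := by
  have hvanish : ∀ j, j ≠ i → (v' - v) (b j) = 0 := by
    intro j hji
    simp [hb.apply_eq, hne j j.2 (Subtype.coe_injective.ne hji), (mem_facet.1 j.2).2]
  have hcoord (x : E) : v' x - v x = (v' - v) (b i) * b.repr x i :=
    LinearMap.congr_fun (dual_eq_smul_coord b hvanish) x
  have hscale : 0 ≤ (v' - v) (b i) := by
    have hi := facet_subset i.2
    simpa [hb.apply_eq, (mem_facet.1 i.2).2] using
      mul_nonneg (ha i hi) (neg_le_iff_add_nonneg.1 (hv' i hi))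
  have hscale_ne : (v' - v) (b i) ≠ 0 := by
    intro hzero
    have := hcoord u
    rw [hzero, hu] at this
    linarith
  have heval : (v' - v) (b i) * b.repr (w - l • u) i = v' w + 1 := by
    rw [← hcoord]
    simp only [map_sub, map_smul, smul_eq_mul, hu]
    linarith
  exact nonneg_of_mul_nonneg_right (heval ▸ neg_le_iff_add_nonneg.1 (hv' w hw))
    (hscale.lt_of_ne' hscale_ne)

end IsFacetBasis

namespace IsUnimodularPolytope

theorem weight_smul_mem (h : IsUnimodularPolytope S a L V) (hw : w ∈ S) : a w • w ∈ L := by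
  obtain ⟨v, hv, b, hb, hrepr⟩ := h.exists_repr_nonneg w
  have hcase : w = 0 ∨ w ∈ facet S v :=
    hb.eq_or_mem_facet (fun s hs => zero_le_one.trans (h.one_le_weight s hs))
      (h.mem_extremePoints w hw) h.zero_mem (l := 1 + v w)
      (neg_le_iff_add_nonneg'.1 (h.neg_one_le v hv w hw)) (by simp) (by simpa using hrepr)
  rcases hcase with rfl | hwv
  · simp
  · rw [← hb.span_eq, ← hb.apply_eq ⟨w, hwv⟩]
    exact Submodule.subset_span (mem_range_self _)

theorem exists_nat_repr (h : IsUnimodularPolytope S a L V) {x : E} (hx : x ∈ L) :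
    ∃ v ∈ V, ∃ m : facet S v → ℕ,
      x = ∑ s, (m s * a s) • (s : E) ∧ v x = -∑ s, m s * a s := by
  obtain ⟨v, hv, b, hb, hrepr⟩ := h.exists_repr_nonneg x
  have hnat : ∀ s, ∃ m : ℕ, b.repr x s = m := by
    intro s
    obtain ⟨z, hz⟩ := (b.mem_span_iff_repr_mem ℤ x).1 (hb.span_eq ▸ hx) s
    have hz0 : (0 : ℝ) ≤ z := by simpa [← hz] using hrepr s
    lift z to ℕ using by exact_mod_cast hz0
    exact ⟨z, by simpa using hz.symm⟩
  choose m hm using hnat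
  refine ⟨v, hv, m, ?_, ?_⟩
  · simpa only [hm] using (hb.sum_repr_mul_weight_smul x).symm
  · simpa only [hm] using hb.apply_eq_neg_sum x

theorem weightedHeight_nonneg (h : IsUnimodularPolytope S a L V) (hv : v ∈ V) (hu : u ∈ S) :
    0 ≤ weightedHeight a v u :=
  mul_nonneg (zero_le_one.trans (h.one_le_weight u hu))
    (neg_le_iff_add_nonneg'.1 (h.neg_one_le v hv u hu))

theorem exists_relation (h : IsUnimodularPolytope S a L V) {T : Finset E} (hTS : T ⊆ S)
    (hT : ∀ v ∈ V, ∃ s ∈ T, v s ≠ -1) :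
    ∃ F ⊆ S, ∃ m : F → ℕ, ∑ s ∈ T, a s • s = ∑ s, (m s * a s) • (s : E) ∧
      ∑ s, m s * a s < ∑ s ∈ T, a s := by
  obtain ⟨v, hv, m, hx, hvx⟩ :=
    h.exists_nat_repr (sum_mem fun s hs => h.weight_smul_mem (hTS hs) : ∑ s ∈ T, a s • s ∈ L)
  refine ⟨facet S v, facet_subset, m, hx, ?_⟩
  have hpos : 0 < ∑ s ∈ T, weightedHeight a v s := by
    obtain ⟨s, hs, hvs⟩ := hT v hv
    refine Finset.sum_pos' (fun s hs => h.weightedHeight_nonneg hv (hTS hs)) ⟨s, hs, ?_⟩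
    exact mul_pos (zero_lt_one.trans_le (h.one_le_weight s (hTS hs)))
      (neg_lt_iff_pos_add'.1 ((h.neg_one_le v hv s (hTS hs)).lt_of_ne' hvs))
  have hsum := sum_weightedHeight (a := a) (v := v) T 1 id
  simp only [Pi.one_apply, one_mul, id, hvx] at hsum
  linarith

theorem card_facet (h : IsUnimodularPolytope S a L V) (hv : v ∈ V) :
    (facet S v).card = finrank ℝ E := by
  obtain ⟨b, -⟩ := h.exists_basis v hv
  rw [finrank_eq_card_basis b, Fintype.card_coe]

theorem exists_mem_facet_forall_exists_ne [DecidableEq E] (h : IsUnimodularPolytope S a L V)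
    (hcard : finrank ℝ E + 2 ≤ S.card) (hv : v ∈ V) (hu : u ∈ S) (huv : u ∉ facet S v) :
    ∃ i ∈ facet S v, ∀ v' ∈ V, ∃ s ∈ insert u ((facet S v).erase i), v' s ≠ -1 := by
  by_contra! hc
  choose! v' hv' hall using hc
  obtain ⟨b, hb⟩ := h.exists_basis v hv
  have ha : ∀ s ∈ S, 0 ≤ a s := fun s hs => zero_le_one.trans (h.one_le_weight s hs)
  have hvu : -1 < v u :=
    (h.neg_one_le v hv u hu).lt_of_ne' fun hvu => huv (mem_facet.2 ⟨hu, hvu⟩)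
  have hS : S ⊆ insert u (facet S v) := by
    intro w hw
    have hheight : (1 + v w) / (1 + v u) * (1 + v u) = 1 + v w := div_mul_cancel₀ _ (by linarith)
    refine Finset.mem_insert.2 (hb.eq_or_mem_facet ha (h.mem_extremePoints w hw)
      (subset_convexHull ℝ _ hu) (div_nonneg ?_ ?_) hheight fun i => ?_)
    · linarith [h.neg_one_le v hv w hw]
    · linarith
    · exact hb.repr_sub_smul_nonneg ha (h.neg_one_le _ (hv' i i.2))
        (fun s hs hsi => hall i i.2 s (by simp [hs, hsi])) (hall i i.2 u (by simp)) hvu hw hheight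
  have := (Finset.card_le_card hS).trans (Finset.card_insert_le u _)
  rw [h.card_facet hv] at this
  omega

variable {C : ℝ}

theorem weightedHeight_le_mul (h : IsUnimodularPolytope S a L V)
    (hcard : finrank ℝ E + 2 ≤ S.card)
    (hC : ∀ T ⊆ S, T.card ≤ finrank ℝ E → ∑ s ∈ T, a s ≤ C) (hv : v ∈ V) (hu : u ∈ S)
    (huv : u ∉ facet S v) {K : ℝ} (hK : 1 ≤ K)
    (hbelow : ∀ f ∈ S, weightedHeight a v f < weightedHeight a v u → weightedHeight a v f ≤ K) :
    weightedHeight a v u ≤ C * K := by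
  classical
  obtain ⟨i, hi, hT⟩ := h.exists_mem_facet_forall_exists_ne hcard hv hu huv
  have huE : u ∉ (facet S v).erase i := fun hmem => huv (Finset.mem_of_mem_erase hmem)
  set T := insert u ((facet S v).erase i)
  have hTS : T ⊆ S :=
    Finset.insert_subset hu ((Finset.erase_subset _ _).trans facet_subset)
  have hTcard : T.card ≤ finrank ℝ E := by
    rw [Finset.card_insert_of_notMem huE, Finset.card_erase_add_one hi, h.card_facet hv]
  have hTu : ∑ s ∈ T, weightedHeight a v s = weightedHeight a v u := by
    rw [Finset.sum_insert huE, add_eq_left]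
    exact Finset.sum_eq_zero fun s hs =>
      weightedHeight_eq_zero_of_mem_facet (Finset.mem_of_mem_erase hs)
  obtain ⟨F, hFS, m, hrel, hdeg⟩ := h.exists_relation hTS hT
  calc weightedHeight a v u = ∑ s ∈ T, weightedHeight a v s := hTu.symm
    _ ≤ (∑ s ∈ T, a s) * K :=
      sum_weightedHeight_le_mul hrel hdeg (fun s => h.one_le_weight s (hFS s.2))
        (fun s => h.neg_one_le v hv s (hFS s.2)) hK fun s => hTu ▸ hbelow s (hFS s.2)
    _ ≤ C * K := by gcongr; exact hC T hTS hTcard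

theorem weightedHeight_le_pow (h : IsUnimodularPolytope S a L V) {r : ℕ}
    (hcard : S.card = finrank ℝ E + r) (hr : 2 ≤ r)
    (hC : ∀ T ⊆ S, T.card ≤ finrank ℝ E → ∑ s ∈ T, a s ≤ C) (hv : v ∈ V) (hu : u ∈ S) :
    weightedHeight a v u ≤ C ^ r := by
  classical
  obtain ⟨b, -⟩ := h.exists_basis v hv
  have : Module.Finite ℝ E := Module.Finite.of_basis b
  have : Nontrivial E :=
    let ⟨x, _, y, _, hxy⟩ := Finset.one_lt_card.1 (by omega : 1 < S.card)
    ⟨x, y, hxy⟩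
  have hfinrank : 1 ≤ finrank ℝ E := finrank_pos
  have hC1 : 1 ≤ C := (h.one_le_weight u hu).trans <| by
    simpa using hC {u} (by simpa using hu) (by simpa using hfinrank)
  have hPcard : (S \ facet S v).card = r := by
    rw [Finset.card_sdiff_of_subset facet_subset, h.card_facet hv, hcard, Nat.add_sub_cancel_left]
  by_cases huv : u ∈ facet S v
  · exact weightedHeight_eq_zero_of_mem_facet (a := a) huv ▸ pow_nonneg (zero_le_one.trans hC1) r
  rw [← hPcard]
  refine le_pow_card_of_forall_le_mul (weightedHeight a v) hC1 _ (fun s hs K hK hbelow => ?_) u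
    (Finset.mem_sdiff.2 ⟨hu, huv⟩)
  obtain ⟨hsS, hsv⟩ := Finset.mem_sdiff.1 hs
  refine h.weightedHeight_le_mul (by omega) hC hv hsS hsv hK fun f hf hlt => ?_
  by_cases hfv : f ∈ facet S v
  · exact (weightedHeight_eq_zero_of_mem_facet hfv).trans_le (zero_le_one.trans hK)
  · exact hbelow f (Finset.mem_sdiff.2 ⟨hf, hfv⟩) hlt

end IsUnimodularPolytope

end UnimodularPolytope

section DualSet

variable {n : ℕ} {S : Finset (Fin n → ℝ)} {Q : Set (Fin n → ℝ)}

theorem mem_dualSet_convexHull {T : Set (Fin n → ℝ)} {v : Fin n → ℝ} :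
    v ∈ dualSet n (convexHull ℝ T) ↔ ∀ s ∈ T, -1 ≤ v ⬝ᵥ s :=
  ⟨fun h s hs => h s (subset_convexHull ℝ T hs), fun h _ hu =>
    convexHull_min h (convex_halfSpace_ge (dotProductEquiv ℝ (Fin n) v).isLinear (-1)) hu⟩

theorem isCompact_dualSet (h0 : (0 : Fin n → ℝ) ∈ interior Q) : IsCompact (dualSet n Q) := by
  obtain ⟨ε, hε, hball⟩ := Metric.nhds_basis_closedBall.mem_iff.1 (mem_interior_iff_mem_nhds.1 h0)
  have hclosed : IsClosed (dualSet n Q) := by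
    simp only [dualSet, ofPred_forall]
    exact isClosed_biInter fun u _ => isClosed_le continuous_const (by fun_prop)
  refine (isCompact_closedBall 0 ε⁻¹).of_isClosed_subset hclosed fun v hv => ?_
  have hcoord (i : Fin n) (t : ℝ) (ht : |t| ≤ ε) : -1 ≤ v i * t := by
    have hmem : Pi.single i t ∈ Q := hball (by simpa [Pi.norm_single] using ht)
    exact (hv _ hmem).trans_eq (dotProduct_single v t i)
  rw [mem_closedBall_zero_iff, pi_norm_le_iff_of_nonneg (inv_nonneg.2 hε.le)]
  intro i
  have hpos := hcoord i ε (abs_of_pos hε).le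
  have hneg := hcoord i (-ε) (by rw [abs_neg, abs_of_pos hε])
  rw [Real.norm_eq_abs, ← one_div, abs_le, ← neg_div, div_le_iff₀ hε, le_div_iff₀ hε]
  constructor <;> linarith

theorem exists_mem_extremePoints_dualSet_forall_le (h0 : (0 : Fin n → ℝ) ∈ interior Q)
    (x : Fin n → ℝ) :
    ∃ v ∈ (dualSet n Q).extremePoints ℝ, ∀ w ∈ dualSet n Q, v ⬝ᵥ x ≤ w ⬝ᵥ x := by
  let evalAt : StrongDual ℝ (Fin n → ℝ) := ((dotProductEquiv ℝ (Fin n)) x).toContinuousLinearMap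
  obtain ⟨v, hv, hmin⟩ := exists_mem_extremePoints_isMinOn (isCompact_dualSet h0)
    ⟨0, fun u _ => by simp⟩ evalAt
  refine ⟨v, hv, fun w hw => ?_⟩
  rw [dotProduct_comm v, dotProduct_comm w]
  exact hmin hw

variable {a : (Fin n → ℝ) → ℝ}

theorem exists_isFacetBasis {v : Fin n → ℝ} {e : Fin n → Fin n → ℝ} (hinj : Function.Injective e)
    (he : ∀ s, s ∈ facet S (dotProductEquiv ℝ (Fin n) v) ↔ ∃ i, e i = s)
    {M : Matrix (Fin n) (Fin n) ℤ} (hM : ∀ i j, (M i j : ℝ) = a (e i) * e i j)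
    (hdet : IsUnit M.det) :
    ∃ b : Basis (facet S (dotProductEquiv ℝ (Fin n) v)) ℝ (Fin n → ℝ),
      IsFacetBasis a (integralVectors ℤ ℝ (Fin n)) b := by
  obtain ⟨b, hb, hspan⟩ := exists_basis_rows_of_isUnit_det ℝ hdet
  let φ : Fin n ≃ facet S (dotProductEquiv ℝ (Fin n) v) :=
    (Equiv.ofInjective e hinj).trans (Equiv.subtypeEquivRight fun s => (he s).symm)
  refine ⟨b.reindex φ, fun s => ?_, by rw [b.range_reindex, hspan]⟩
  obtain ⟨i, rfl⟩ := φ.surjective s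
  have hφ : (φ i : Fin n → ℝ) = e i := rfl
  ext j
  simp [hb, hM, hφ]

theorem isUnimodularPolytope_dualSet {L : Submodule ℤ (Fin n → ℝ)} (ha : ∀ s ∈ S, 1 ≤ a s)
    (hS : (S : Set (Fin n → ℝ)) ⊆ (convexHull ℝ (S : Set (Fin n → ℝ))).extremePoints ℝ)
    (h0 : (0 : Fin n → ℝ) ∈ interior (convexHull ℝ (S : Set (Fin n → ℝ))))
    (hbasis : ∀ v ∈ (dualSet n (convexHull ℝ (S : Set (Fin n → ℝ)))).extremePoints ℝ,
      ∃ b : Basis (facet S (dotProductEquiv ℝ (Fin n) v)) ℝ (Fin n → ℝ), IsFacetBasis a L b) :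
    IsUnimodularPolytope S a L (dotProductEquiv ℝ (Fin n) ''
      (dualSet n (convexHull ℝ (S : Set (Fin n → ℝ)))).extremePoints ℝ) where
  one_le_weight := ha
  mem_extremePoints := fun s hs => hS hs
  zero_mem := interior_subset h0
  neg_one_le := forall_mem_image.2 fun v hv => mem_dualSet_convexHull.1 hv.1
  exists_basis := forall_mem_image.2 hbasis
  exists_repr_nonneg := by
    intro x
    obtain ⟨v, hv, hmin⟩ := exists_mem_extremePoints_dualSet_forall_le h0 x
    obtain ⟨b, hb⟩ := hbasis v hv
    refine ⟨_, mem_image_of_mem _ hv, b, hb, fun i => ?_⟩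
    refine apply_nonneg_of_forall_le (S := S) (c := -1) (v := dotProductEquiv ℝ (Fin n) v)
      (f := b.coord i) (mem_dualSet_convexHull.1 hv.1) ?_ ?_
    · intro w hw
      obtain ⟨w, rfl⟩ := (dotProductEquiv ℝ (Fin n)).surjective w
      exact hmin w (mem_dualSet_convexHull.2 hw)
    · intro s hs hvs
      exact hb.coord_nonneg (fun s hs => zero_lt_one.trans_le (ha s hs)) (mem_facet.2 ⟨hs, hvs⟩) i

end DualSet

theorem stmt3_general (n : ℕ) (S : Finset (Fin n → ℝ))
    (hvert : (convexHull ℝ (S : Set (Fin n → ℝ))).extremePoints ℝ = S)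
    (h0 : (0 : Fin n → ℝ) ∈ interior (convexHull ℝ (S : Set (Fin n → ℝ))))
    (a : (Fin n → ℝ) → ℝ) (ha : ∀ s ∈ S, 1 ≤ a s)
    (hfacet : ∀ v ∈ (dualSet n (convexHull ℝ (S : Set (Fin n → ℝ)))).extremePoints ℝ,
      ∃ e : Fin n → (Fin n → ℝ), Function.Injective e ∧ (∀ i, e i ∈ S) ∧
        (∀ s ∈ S, (∑ j, v j * s j = -1 ↔ ∃ i, e i = s)) ∧
        ∃ M : Matrix (Fin n) (Fin n) ℤ, (∀ i j, (M i j : ℝ) = a (e i) * e i j) ∧ IsUnit M.det)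
    (r : ℕ) (hcard : S.card = n + r) (hr : 2 ≤ r)
    (C : ℝ) (hC : ∀ T ⊆ S, T.card ≤ n → ∑ s ∈ T, a s ≤ C) :
    ∀ u ∈ S, ∀ v ∈ (dualSet n (convexHull ℝ (S : Set (Fin n → ℝ)))).extremePoints ℝ,
      0 ≤ a u * (1 + ∑ j, v j * u j) ∧ a u * (1 + ∑ j, v j * u j) ≤ C ^ r := by
  have hpoly := isUnimodularPolytope_dualSet ha hvert.ge h0 fun v hv => by
    obtain ⟨e, hinj, heS, he, M, hM, hdet⟩ := hfacet v hv
    refine exists_isFacetBasis hinj (fun s => mem_facet.trans ⟨fun hs => (he s hs.1).1 hs.2, ?_⟩)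
      hM hdet
    rintro ⟨i, rfl⟩
    exact ⟨heS i, (he _ (heS i)).2 ⟨i, rfl⟩⟩
  intro u hu v hv
  have hvV := mem_image_of_mem (dotProductEquiv ℝ (Fin n)) hv
  exact ⟨hpoly.weightedHeight_nonneg hvV hu, hpoly.weightedHeight_le_pow
    (by simpa only [finrank_fin_fun]) hr (by simpa only [finrank_fin_fun]) hvV hu⟩

/-- Lemma 4.8 (lem1).  Let `Q ⊆ ℝⁿ` be a polytope with vertex set `S` containing `0`
in its interior, with positive integer weights `a s` on the vertices.  Assume that for
every extreme point `v` of `Q*` the facet `{u ∈ Q : ⟨v,u⟩ = -1}` has exactly `n`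
vertices `e₁,…,eₙ` with `(a(e₁)e₁,…,a(eₙ)eₙ)` a `ℤ`-basis of `ℤⁿ`; that
`r := #S - n ≥ 2`; and that every sum of at most `n` vertex weights is at most `C`.
Then for every vertex `u` of `Q` and every extreme point `v` of `Q*`,
`0 ≤ a(u)(1 + ⟨v,u⟩) ≤ C^r`. -/
theorem stmt3 (n : ℕ) (hn : 1 ≤ n)
    (S : Finset (Fin n → ℝ)) (Q : Set (Fin n → ℝ))
    (hQ : Q = convexHull ℝ (S : Set (Fin n → ℝ)))
    (hvert : Set.extremePoints ℝ Q = (S : Set (Fin n → ℝ)))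
    (h0 : (0 : Fin n → ℝ) ∈ interior Q)
    (a : (Fin n → ℝ) → ℤ) (hapos : ∀ s ∈ S, 0 < a s)
    (hfacet : ∀ v ∈ Set.extremePoints ℝ (dualSet n Q),
      ∃ e : Fin n → (Fin n → ℝ), Function.Injective e ∧ (∀ i, e i ∈ S) ∧
        (∀ s ∈ S, ((∑ j, v j * s j = -1) ↔ ∃ i, e i = s)) ∧
        ∃ M : Matrix (Fin n) (Fin n) ℤ,
          (∀ i j, ((M i j : ℤ) : ℝ) = (a (e i) : ℝ) * e i j) ∧ IsUnit M.det)
    (r : ℕ) (hcard : S.card = n + r) (hr : 2 ≤ r)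
    (C : ℝ) (hC : ∀ T ⊆ S, T.card ≤ n → ∑ s ∈ T, (a s : ℝ) ≤ C) :
    ∀ u ∈ S, ∀ v ∈ Set.extremePoints ℝ (dualSet n Q),
      0 ≤ (a u : ℝ) * (1 + ∑ j, v j * u j) ∧
        (a u : ℝ) * (1 + ∑ j, v j * u j) ≤ C ^ r := by
  subst hQ
  exact stmt3_general n S hvert h0 (fun s => a s) (fun s hs => by exact_mod_cast hapos s hs)
    hfacet r hcard hr C hC
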